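/- Any two vertex preorders lying in a common facet F of C(m,n) are connected by a sequence of edges all of whose preorders lie in F: if F is a good rectangular preorder with two equivalence classes C₁ < C₂, and v, w are vertex preorders refining F (meaning x <_v y and x <_w y for all x ∈ C₁, y ∈ C₂), then there is an edge path from v to w through vertex preorders all refining F. -/

import Mathlib

/-- `Coll m n` is the set of collisions: vertical collisions `mᵢ` for `1 ≤ i < m`
(encoded `Sum.inl`) and horizontal collisions `lⱼ` for `1 ≤ j < n` (encoded `Sum.inr`). -/
abbrev Coll (m n : ℕ) := Fin (m - 1) ⊕ Fin (n - 1)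

/-- A vertical and a horizontal collision are orthogonal. -/
def Orthogonal {m n : ℕ} : Coll m n → Coll m n → Prop
  | Sum.inl _, Sum.inr _ => True
  | Sum.inr _, Sum.inl _ => True
  | _, _ => False

/-- Two distinct collisions of the same kind are parallel. -/
def Parallel {m n : ℕ} : Coll m n → Coll m n → Prop
  | Sum.inl i, Sum.inl j => i ≠ j
  | Sum.inr i, Sum.inr j => i ≠ j
  | _, _ => False

/-- `Between x y g`: `g` is a collision parallel to `x` and `y` whose index lies in the
interval spanned by the indices of `x` and `y`. -/
def Between {m n : ℕ} : Coll m n → Coll m n → Coll m n → Prop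
  | Sum.inl i, Sum.inl j, Sum.inl s => min i j ≤ s ∧ s ≤ max i j
  | Sum.inr i, Sum.inr j, Sum.inr s => min i j ≤ s ∧ s ≤ max i j
  | _, _, _ => False

/-- Strict comparison in a preorder `R`. -/
def StrictR {m n : ℕ} (R : Coll m n → Coll m n → Prop) (x y : Coll m n) : Prop :=
  R x y ∧ ¬ R y x

/-- `z` is an orthogonal link between the parallel collisions `x` and `y`:
`z` is orthogonal to them and `x ≤ z ≤ y` or `y ≤ z ≤ x`. -/
def IsLink {m n : ℕ} (R : Coll m n → Coll m n → Prop) (x y z : Coll m n) : Prop :=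
  Orthogonal x z ∧ ((R x z ∧ R z y) ∨ (R y z ∧ R z x))

/-- `g` is a gap between the parallel collisions `x` and `y`: its index is between theirs
and `x < g > y` strictly. -/
def IsGap {m n : ℕ} (R : Coll m n → Coll m n → Prop) (x y g : Coll m n) : Prop :=
  Between x y g ∧ StrictR R x g ∧ StrictR R y g

/-- A good rectangular preorder on `Coll m n`: a reflexive transitive relation such that
orthogonal collisions are always comparable, and parallel collisions are comparable iff
there is an orthogonal link between them or there is no gap between them. -/
structure IsGoodRect {m n : ℕ} (R : Coll m n → Coll m n → Prop) : Prop where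
  refl : ∀ x, R x x
  trans : ∀ x y z, R x y → R y z → R x z
  orth : ∀ x y, Orthogonal x y → R x y ∨ R y x
  par : ∀ x y, Parallel x y →
    ((R x y ∨ R y x) ↔ ((∃ z, IsLink R x y z) ∨ ¬ ∃ g, IsGap R x y g))

/-- `P` refines `Q`: every comparison of `P` holds in `Q`. -/
def Refines {m n : ℕ} (P Q : Coll m n → Coll m n → Prop) : Prop :=
  ∀ x y, P x y → Q x y

/-- A vertex preorder: a good rectangular preorder in which equivalence implies equality. -/
def IsVertexP {m n : ℕ} (R : Coll m n → Coll m n → Prop) : Prop :=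
  IsGoodRect R ∧ ∀ x y, R x y → R y x → x = y

/-- An edge preorder: a good rectangular preorder with exactly one equivalence class of
size two (the pair `{a,b}`), all other classes being singletons. -/
def IsEdgeP {m n : ℕ} (R : Coll m n → Coll m n → Prop) : Prop :=
  IsGoodRect R ∧ ∃ a b : Coll m n, a ≠ b ∧ R a b ∧ R b a ∧
    ∀ x y : Coll m n, x ≠ y → R x y → R y x → (x = a ∧ y = b) ∨ (x = b ∧ y = a)

/-- Adjacency of vertex preorders within the facet `F`: both vertices refine `F` and some
edge preorder refining `F` is refined by both. -/
def AdjVFacet {m n : ℕ} (F v w : Coll m n → Coll m n → Prop) : Prop :=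
  IsVertexP v ∧ IsVertexP w ∧ Refines v F ∧ Refines w F ∧
    ∃ E : Coll m n → Coll m n → Prop,
      IsEdgeP E ∧ Refines v E ∧ Refines w E ∧ Refines E F

/-!
A good rectangular preorder is determined by any height function `f` that decides each of its
comparisons: it is the preorder `heightPreorder f` in which `x ≤ y` when `f x ≤ f y` and the two
are not separated by a gap without link. Such a height exists for every good rectangular preorder,
and it can be chosen injective and finer than a height of `F` for a vertex preorder refining `F`.
Two injective heights are joined by bubble sort: each step exchanges the values at two elements
`a`, `b` of consecutive heights. Giving `a` and `b` the same height produces either an edge preorder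
refined by both sides of the exchange, or a vertex preorder equal to both. As only pairs in the
wrong relative order are exchanged, every step stays finer than the height of `F`.
-/

variable {α ι κ μ : Type*} [LinearOrder ι] [LinearOrder κ] [LinearOrder μ]

section Heights

/-- `f` is a height function for the relation `R`: it decides the direction of every comparison
of `R`, while elements that are incomparable in `R` may have any heights. -/
def IsHeight (R : α → α → Prop) (f : α → ι) : Prop :=
  ∀ ⦃x y⦄, R x y ∨ R y x → (R x y ↔ f x ≤ f y)

lemma IsHeight.le {R : α → α → Prop} {f : α → ι} (hf : IsHeight R f) {x y : α} (h : R x y) :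
    f x ≤ f y :=
  (hf (.inl h)).1 h

/-- The total preorder on `α` induced by `f` contains the one induced by `g`. -/
def Coarsens (f : α → κ) (g : α → ι) : Prop :=
  ∀ ⦃x y⦄, g x ≤ g y → f x ≤ f y

lemma Coarsens.trans {f : α → κ} {t : α → μ} {g : α → ι} (hft : Coarsens f t)
    (htg : Coarsens t g) : Coarsens f g :=
  fun _ _ h => hft (htg h)

lemma isHeight_ncard_setOf [Finite α] {R : α → α → Prop} (hrefl : ∀ x, R x x)
    (htrans : ∀ x y z, R x y → R y z → R x z) : IsHeight R fun x => {z | R z x}.ncard := by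
  have hsub {x y} (h : R x y) : {z | R z x} ⊆ {z | R z y} := fun z hz => htrans z x y hz h
  refine fun x y hc => ⟨fun h => Set.ncard_le_ncard (hsub h), fun hle => ?_⟩
  refine hc.elim id fun hyx => ?_
  have heq := Set.eq_of_subset_of_ncard_le (hsub hyx) hle
  exact heq.symm.subset (hrefl x)

lemma exists_injective_isHeight_coarsens [Countable α] {R : α → α → Prop} (hrefl : ∀ x, R x x)
    (hanti : ∀ x y, R x y → R y x → x = y) {p : α → ι} (hp : IsHeight R p)
    {f : α → κ} (hf : ∀ x y, R x y → f x ≤ f y) :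
    ∃ g : α → κ ×ₗ ι ×ₗ ℕ, Function.Injective g ∧ IsHeight R g ∧ Coarsens f g := by
  obtain ⟨e, he⟩ := exists_injective_nat α
  -- `f` comes first so that it coarsens `g`, then `p` to extend `R`; `e` breaks the remaining ties.
  let g : α → κ ×ₗ ι ×ₗ ℕ := fun x => toLex (f x, toLex (p x, e x))
  have hg : Function.Injective g := fun x y h => by
    simp only [g, EmbeddingLike.apply_eq_iff_eq, Prod.mk.injEq] at h
    exact he h.2.2
  have hle {x y} (h : R x y) : g x ≤ g y := by
    refine Prod.Lex.toLex_le_toLex'.2 ⟨hf x y h, fun _ => Prod.Lex.toLex_le_toLex'.2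
      ⟨hp.le h, fun heq => ?_⟩⟩
    have hyx : R y x := (hp (.inr h)).2 heq.ge
    exact (congrArg e (hanti x y h hyx)).le
  refine ⟨g, hg, fun x y hc => ⟨hle, fun hxy => ?_⟩, fun x y h => (Prod.Lex.toLex_le_toLex'.1 h).1⟩
  refine hc.elim id fun hyx => ?_
  rw [hg (hxy.antisymm (hle hyx))]
  exact hrefl y

end Heights

section BubbleSort

/-- `a` and `b` occupy consecutive heights: `b` lies above `a` with nothing in between. -/
def IsConsecutive (g : α → ι) (a b : α) : Prop :=
  g a < g b ∧ ∀ z, g z ≤ g a ∨ g b ≤ g z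

/-- The pairs ordered one way by `g` and the other way by `h`, the termination measure of
bubble sort. -/
def inversions (g : α → ι) (h : α → κ) : Set (α × α) :=
  {p | g p.1 < g p.2 ∧ h p.2 < h p.1}

lemma exists_isConsecutive_inversion [Finite α] {g : α → ι} (hg : Function.Injective g)
    {h : α → κ} (hgh : ¬ Coarsens h g) : ∃ a b, IsConsecutive g a b ∧ h b < h a := by
  classical
  have := Fintype.ofFinite α
  let : LinearOrder α := LinearOrder.lift' g hg
  let : LocallyFiniteOrder α := Fintype.toLocallyFiniteOrder
  have hmono : ¬ Monotone h := hgh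
  simp only [monotone_iff_forall_covBy, not_forall, not_le] at hmono
  obtain ⟨a, b, hab, hlt⟩ := hmono
  refine ⟨a, b, ⟨hab.lt, fun z => ?_⟩, hlt⟩
  exact (le_or_gt z a).imp id hab.ge_of_gt

variable [DecidableEq α]

/-- The height obtained from `g` by moving `b` to the height of `a`. -/
def tie (g : α → ι) (a b : α) : α → ι :=
  Function.update g b (g a)

namespace IsConsecutive

variable {g : α → ι} {a b : α}

lemma tie_le_tie_iff (hg : Function.Injective g) (hab : IsConsecutive g a b) {x y : α} :
    tie g a b x ≤ tie g a b y ↔ g x ≤ g y ∨ (x = b ∧ y = a) := by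
  obtain ⟨hlt, hgap⟩ := hab
  have := @hg y a
  simp only [tie, Function.update_apply]
  grind

lemma tie_coarsens (hg : Function.Injective g) (hab : IsConsecutive g a b) :
    Coarsens (tie g a b) g :=
  fun _ _ h => (hab.tie_le_tie_iff hg).2 (.inl h)

lemma tie_coarsens_comp_swap (hg : Function.Injective g) (hab : IsConsecutive g a b) :
    Coarsens (tie g a b) (g ∘ Equiv.swap a b) := by
  intro x y h
  rw [hab.tie_le_tie_iff hg]
  obtain ⟨hlt, hgap⟩ := hab
  simp only [Function.comp_apply, Equiv.swap_apply_def] at h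
  grind

lemma coarsens_tie (hg : Function.Injective g) (hab : IsConsecutive g a b) {f : α → κ}
    (hf : Coarsens f g) (hba : f b ≤ f a) : Coarsens f (tie g a b) := by
  intro x y h
  rcases (hab.tie_le_tie_iff hg).1 h with h | ⟨rfl, rfl⟩
  exacts [hf h, hba]

lemma eq_or_eq_of_tie_eq (hg : Function.Injective g) (hab : IsConsecutive g a b) {x y : α}
    (hne : x ≠ y) (h : tie g a b x = tie g a b y) : (x = a ∧ y = b) ∨ (x = b ∧ y = a) := by
  have hxy := (hab.tie_le_tie_iff hg).1 h.le
  have hyx := (hab.tie_le_tie_iff hg).1 h.ge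
  have := @hg x y
  grind

lemma inversions_comp_swap_ssubset (hg : Function.Injective g) (hab : IsConsecutive g a b)
    {h : α → κ} (hba : h b < h a) : inversions (g ∘ Equiv.swap a b) h ⊂ inversions g h := by
  refine Set.ssubset_iff_exists.2 ⟨?_, (a, b), ⟨hab.1, hba⟩, fun hinv => ?_⟩
  · rintro ⟨x, y⟩ ⟨hlt, hyx⟩
    refine ⟨?_, hyx⟩
    have hxy := (hab.tie_le_tie_iff hg).1 (hab.tie_coarsens_comp_swap hg hlt.le)
    have := @hg x y
    grind
  · exact hab.1.not_gt (by simpa using hinv.1)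

end IsConsecutive

theorem bubbleSort_induction [Finite α] {h : α → κ} {P : (α → ι) → Prop}
    (sorted : ∀ g, Function.Injective g → Coarsens h g → P g)
    (swap : ∀ g a b, Function.Injective g → IsConsecutive g a b → h b < h a →
      P (g ∘ Equiv.swap a b) → P g)
    {g : α → ι} (hg : Function.Injective g) : P g := by
  induction hs : inversions g h using WellFoundedLT.induction generalizing g with
  | ind s ih =>
    subst hs
    by_cases hgh : Coarsens h g
    · exact sorted g hg hgh
    obtain ⟨a, b, hab, hba⟩ := exists_isConsecutive_inversion hg hgh
    exact swap g a b hg hab hba <|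
      ih _ (hab.inversions_comp_swap_ssubset hg hba) (hg.comp (Equiv.injective _)) rfl

end BubbleSort

section Collisions

variable {m n : ℕ} {x y z g k : Coll m n}

lemma Orthogonal.symm (h : Orthogonal x y) : Orthogonal y x := by
  rcases x with x | x <;> rcases y with y | y <;> simp_all [Orthogonal]

lemma Orthogonal.of_not_orthogonal (h : Orthogonal x z) (hxy : ¬ Orthogonal x y) :
    Orthogonal y z := by
  rcases x with x | x <;> rcases y with y | y <;> rcases z with z | z <;> simp_all [Orthogonal]

lemma parallel_iff : Parallel x y ↔ ¬ Orthogonal x y ∧ x ≠ y := by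
  rcases x with x | x <;> rcases y with y | y <;> simp [Orthogonal, Parallel]

lemma between_left (h : ¬ Orthogonal x y) : Between x y x := by
  rcases x with x | x <;> rcases y with y | y <;> simp_all [Between, Orthogonal]

namespace Between

lemma symm (h : Between x y g) : Between y x g := by
  rcases x with x | x <;> rcases y with y | y <;> rcases g with g | g <;>
    simp_all [Between, min_comm, max_comm]

lemma not_orthogonal (h : Between x y g) : ¬ Orthogonal x y := by
  rcases x with x | x <;> rcases y with y | y <;> simp_all [Between, Orthogonal]

lemma not_orthogonal_left (h : Between x y g) : ¬ Orthogonal x g := by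
  rcases x with x | x <;> rcases y with y | y <;> rcases g with g | g <;>
    simp_all [Between, Orthogonal]

lemma eq_of_self (h : Between x x g) : g = x := by
  rcases x with x | x <;> rcases g with g | g <;> simp only [Between] at h <;> grind

lemma of_between_left (hg : Between x y g) (hk : Between x g k) : Between x y k := by
  rcases x with x | x <;> rcases y with y | y <;> rcases g with g | g <;> rcases k with k | k <;>
    simp only [Between] at * <;> grind

lemma of_between_right (hg : Between x y g) (hk : Between y g k) : Between x y k :=
  (hg.symm.of_between_left hk).symm

lemma left_or_right (h : Between x z g) (hxy : ¬ Orthogonal x y) :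
    Between x y g ∨ Between y z g := by
  rcases x with x | x <;> rcases y with y | y <;> rcases z with z | z <;> rcases g with g | g <;>
    simp only [Between, Orthogonal] at * <;> grind

end Between

end Collisions

section HeightPreorder

variable {m n : ℕ}

/-- The good rectangular preorder induced by a height function: `x` lies below `y` when
`f x ≤ f y` and there is an orthogonal link between them or no gap between them. Since
`f x ≤ f y`, a link has height in `[f x, f y]` and a gap is anything between `x` and `y` that is
higher than `y`. -/
def heightPreorder (f : Coll m n → ι) (x y : Coll m n) : Prop :=
  f x ≤ f y ∧
    ((∃ z, Orthogonal x z ∧ f x ≤ f z ∧ f z ≤ f y) ∨ ∀ g, Between x y g → f g ≤ f y)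

variable {f : Coll m n → ι} {x y z : Coll m n}

lemma heightPreorder_iff_of_orthogonal (h : Orthogonal x y) :
    heightPreorder f x y ↔ f x ≤ f y :=
  ⟨And.left, fun hle => ⟨hle, .inr fun _ hg => absurd h hg.not_orthogonal⟩⟩

lemma heightPreorder_refl (x : Coll m n) : heightPreorder f x x :=
  ⟨le_rfl, .inr fun _ hg => (congrArg f hg.eq_of_self).le⟩

lemma heightPreorder_symm_of_eq (h : heightPreorder f x y) (heq : f x = f y) :
    heightPreorder f y x := by
  by_cases ho : Orthogonal x y
  · exact (heightPreorder_iff_of_orthogonal ho.symm).2 heq.ge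
  obtain ⟨-, ⟨z, hz, hxz, hzy⟩ | hgap⟩ := h
  · exact ⟨heq.ge, .inl ⟨z, hz.of_not_orthogonal ho, heq ▸ hxz, heq ▸ hzy⟩⟩
  · exact ⟨heq.ge, .inr fun g hg => heq ▸ hgap g hg.symm⟩

lemma heightPreorder_trans (hxy : heightPreorder f x y) (hyz : heightPreorder f y z) :
    heightPreorder f x z := by
  refine ⟨hxy.1.trans hyz.1, ?_⟩
  by_cases ho : Orthogonal x y
  · exact .inl ⟨y, ho, hxy.1, hyz.1⟩
  obtain ⟨hxy, ⟨l, hl, hxl, hly⟩ | hgap_xy⟩ := hxy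
  · exact .inl ⟨l, hl, hxl, hly.trans hyz.1⟩
  obtain ⟨hyz, ⟨l, hl, hyl, hlz⟩ | hgap_yz⟩ := hyz
  · exact .inl ⟨l, hl.of_not_orthogonal (mt Orthogonal.symm ho), hxy.trans hyl, hlz⟩
  refine .inr fun g hg => ?_
  exact (hg.left_or_right ho).elim (fun h => (hgap_xy g h).trans hyz) (hgap_yz g)

lemma isHeight_heightPreorder (f : Coll m n → ι) : IsHeight (heightPreorder f) f :=
  fun _ _ hc => ⟨And.left, fun hle =>
    hc.elim id fun h => heightPreorder_symm_of_eq h (h.1.antisymm hle)⟩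

lemma heightPreorder_of_peak (hxy : ¬ Orthogonal x y) (hpeak : ∀ k, Between x y k → f k ≤ f y) :
    heightPreorder f x y :=
  ⟨hpeak x (between_left hxy), .inr hpeak⟩

lemma Coarsens.refines {f : Coll m n → κ} {g : Coll m n → ι} (h : Coarsens f g) :
    Refines (heightPreorder g) (heightPreorder f) := by
  rintro x y ⟨hxy, ⟨z, hz, hxz, hzy⟩ | hgap⟩
  · exact ⟨h hxy, .inl ⟨z, hz, h hxz, h hzy⟩⟩
  · exact ⟨h hxy, .inr fun k hk => h (hgap k hk)⟩

variable {R : Coll m n → Coll m n → Prop}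

lemma isLink_comm (hxy : ¬ Orthogonal x y) : IsLink R x y z ↔ IsLink R y x z :=
  and_congr ⟨fun h => h.of_not_orthogonal hxy,
    fun h => h.of_not_orthogonal (mt Orthogonal.symm hxy)⟩ or_comm

lemma isGap_comm : IsGap R x y z ↔ IsGap R y x z :=
  and_congr ⟨Between.symm, Between.symm⟩ and_comm

lemma IsHeight.exists_isLink_iff (hf : IsHeight R f)
    (horth : ∀ x y, Orthogonal x y → R x y ∨ R y x) (hxy : ¬ Orthogonal x y) (hle : f x ≤ f y) :
    (∃ z, IsLink R x y z) ↔ ∃ z, Orthogonal x z ∧ f x ≤ f z ∧ f z ≤ f y := by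
  refine exists_congr fun z => and_congr_right fun hz => ?_
  have hxz := horth x z hz
  have hyz := horth y z (hz.of_not_orthogonal hxy)
  rw [hf hxz, hf hyz.symm, hf hyz, hf hxz.symm, or_iff_left_iff_imp]
  exact fun ⟨hyz, hzx⟩ => ⟨hle.trans hyz, hzx.trans hle⟩

/-- A gap in the sense of heights need not be comparable with `x` and `y` in `R`, but a highest
one is. -/
lemma IsHeight.exists_isGap_iff (hf : IsHeight R f)
    (hpeak : ∀ x y, ¬ Orthogonal x y → (∀ k, Between x y k → f k ≤ f y) → R x y)
    (hle : f x ≤ f y) : (∃ g, IsGap R x y g) ↔ ∃ g, Between x y g ∧ f y < f g := by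
  refine ⟨fun ⟨g, hg, _, hyg, hgy⟩ => ⟨g, hg, lt_of_not_ge fun h => hgy ((hf (.inr hyg)).2 h)⟩, ?_⟩
  rintro ⟨g₀, hg₀, hlt₀⟩
  obtain ⟨g, hg, hmax⟩ := Set.exists_max_image {k | Between x y k} f (Set.toFinite _) ⟨g₀, hg₀⟩
  have hlt : f y < f g := hlt₀.trans_le (hmax g₀ hg₀)
  have hxg : R x g := hpeak x g hg.not_orthogonal_left fun k hk => hmax k (hg.of_between_left hk)
  have hyg : R y g :=
    hpeak y g hg.symm.not_orthogonal_left fun k hk => hmax k (hg.of_between_right hk)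
  exact ⟨g, hg, ⟨hxg, fun h => (hle.trans_lt hlt).not_ge (hf.le h)⟩,
    hyg, fun h => hlt.not_ge (hf.le h)⟩

lemma IsHeight.link_or_not_gap_iff (hf : IsHeight R f)
    (horth : ∀ x y, Orthogonal x y → R x y ∨ R y x)
    (hpeak : ∀ x y, ¬ Orthogonal x y → (∀ k, Between x y k → f k ≤ f y) → R x y)
    (hxy : ¬ Orthogonal x y) (hle : f x ≤ f y) :
    ((∃ z, IsLink R x y z) ∨ ¬ ∃ g, IsGap R x y g) ↔ heightPreorder f x y := by
  simp only [hf.exists_isLink_iff horth hxy hle, hf.exists_isGap_iff hpeak hle, heightPreorder,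
    hle, true_and, not_exists, not_and, not_lt]

theorem isGoodRect_heightPreorder (f : Coll m n → ι) : IsGoodRect (heightPreorder f) := by
  have horth (x y) (h : Orthogonal x y) : heightPreorder f x y ∨ heightPreorder f y x :=
    (le_total (f x) (f y)).imp (heightPreorder_iff_of_orthogonal h).2
      (heightPreorder_iff_of_orthogonal h.symm).2
  refine ⟨heightPreorder_refl, fun _ _ _ => heightPreorder_trans, horth, fun x y hp => ?_⟩
  have hxy := (parallel_iff.1 hp).1
  wlog hle : f x ≤ f y generalizing x y
  · have hyx := mt Orthogonal.symm hxy
    simp only [isLink_comm hxy, isGap_comm (x := x)]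
    rw [or_comm]
    exact this y x (parallel_iff.2 ⟨hyx, (parallel_iff.1 hp).2.symm⟩) hyx (le_of_not_ge hle)
  have hf := isHeight_heightPreorder f
  rw [hf.link_or_not_gap_iff horth (fun _ _ => heightPreorder_of_peak) hxy hle,
    or_iff_left_iff_imp]
  exact fun h => (hf (.inr h)).2 hle

lemma IsGoodRect.comparable_iff (hR : IsGoodRect R) (hxy : ¬ Orthogonal x y) :
    (R x y ∨ R y x) ↔ ((∃ z, IsLink R x y z) ∨ ¬ ∃ g, IsGap R x y g) := by
  by_cases heq : x = y
  · subst heq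
    refine iff_of_true (.inl (hR.refl x)) (.inr ?_)
    rintro ⟨g, hg, hlt, -⟩
    exact hlt.2 (hg.eq_of_self ▸ hlt.1)
  · exact hR.par x y (parallel_iff.2 ⟨hxy, heq⟩)

lemma IsGoodRect.of_peak (hR : IsGoodRect R) (hf : IsHeight R f) (hxy : ¬ Orthogonal x y)
    (hpeak : ∀ k, Between x y k → f k ≤ f y) : R x y := by
  have hc : R x y ∨ R y x := (hR.comparable_iff hxy).2 <| .inr fun ⟨g, hg, _, hyg, hgy⟩ =>
    hgy ((hf (.inr hyg)).2 (hpeak g hg))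
  exact (hf hc).2 (hpeak x (between_left hxy))

theorem IsGoodRect.eq_heightPreorder (hR : IsGoodRect R) (hf : IsHeight R f) :
    R = heightPreorder f := by
  ext x y
  by_cases hxy : Orthogonal x y
  · rw [hf (hR.orth x y hxy), heightPreorder_iff_of_orthogonal hxy]
  by_cases hle : f x ≤ f y
  · rw [← hf.link_or_not_gap_iff hR.orth (fun _ _ => hR.of_peak hf) hxy hle,
      ← hR.comparable_iff hxy]
    exact ⟨.inl, fun hc => (hf hc).2 hle⟩
  · exact iff_of_false (fun h => hle (hf.le h)) fun h => hle h.1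

end HeightPreorder

section EdgePaths

variable {m n : ℕ} {f : Coll m n → κ} {t : Coll m n → μ} {g h : Coll m n → ι}

lemma isVertexP_heightPreorder (hg : Function.Injective g) : IsVertexP (heightPreorder g) :=
  ⟨isGoodRect_heightPreorder g, fun _ _ hxy hyx => hg (hxy.1.antisymm hyx.1)⟩

lemma Coarsens.heightPreorder_eq (htg : Coarsens t g) (ht : IsVertexP (heightPreorder t)) :
    heightPreorder t = heightPreorder g := by
  refine ht.1.eq_heightPreorder fun x y hc => ⟨fun hxy => ?_, fun hle =>
    (isHeight_heightPreorder t hc).2 (htg hle)⟩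
  by_contra! hlt
  have heq : t x = t y := hxy.1.antisymm (htg hlt.le)
  exact hlt.ne' (congrArg g (ht.2 x y hxy (heightPreorder_symm_of_eq hxy heq)))

lemma reflGen_adjVFacet_of_tie {a b : Coll m n} (hg : Function.Injective g)
    (hh : Function.Injective h) (htg : Coarsens t g) (hth : Coarsens t h) (hft : Coarsens f t)
    (ht : ∀ x y, x ≠ y → t x = t y → (x = a ∧ y = b) ∨ (x = b ∧ y = a)) :
    Relation.ReflGen (AdjVFacet (heightPreorder f)) (heightPreorder g) (heightPreorder h) := by
  by_cases hanti : ∀ x y, heightPreorder t x y → heightPreorder t y x → x = y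
  · have hv : IsVertexP (heightPreorder t) := ⟨isGoodRect_heightPreorder t, hanti⟩
    rw [← htg.heightPreorder_eq hv, ← hth.heightPreorder_eq hv]
  push Not at hanti
  obtain ⟨c, d, hcd, hdc, hne⟩ := hanti
  have hedge : IsEdgeP (heightPreorder t) := by
    refine ⟨isGoodRect_heightPreorder t, c, d, hne, hcd, hdc, fun x y hxy h₁ h₂ => ?_⟩
    have h_cd := ht c d hne (hcd.1.antisymm hdc.1)
    have h_xy := ht x y hxy (h₁.1.antisymm h₂.1)
    grind
  exact .single ⟨isVertexP_heightPreorder hg, isVertexP_heightPreorder hh,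
    (hft.trans htg).refines, (hft.trans hth).refines,
    heightPreorder t, hedge, htg.refines, hth.refines, hft.refines⟩

theorem reflTransGen_adjVFacet_of_coarsens (hg : Function.Injective g) (hh : Function.Injective h)
    (hfg : Coarsens f g) (hfh : Coarsens f h) :
    Relation.ReflTransGen (AdjVFacet (heightPreorder f)) (heightPreorder g)
      (heightPreorder h) := by
  revert hfg
  refine bubbleSort_induction (h := h) (P := fun g => Coarsens f g → Relation.ReflTransGen
    (AdjVFacet (heightPreorder f)) (heightPreorder g) (heightPreorder h)) ?_ ?_ hg
  · intro g _ hhg _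
    rw [hhg.heightPreorder_eq (isVertexP_heightPreorder hh)]
  · intro g a b hg hab hba ih hfg
    have hft : Coarsens f (tie g a b) := hab.coarsens_tie hg hfg (hfh hba.le)
    have htg' := hab.tie_coarsens_comp_swap hg
    have hstep := reflGen_adjVFacet_of_tie hg (hg.comp (Equiv.swap a b).injective)
      (hab.tie_coarsens hg) htg' hft fun _ _ => hab.eq_or_eq_of_tie_eq hg
    exact hstep.to_reflTransGen.trans (ih (hft.trans htg'))

lemma IsVertexP.exists_heightPreorder_eq {v : Coll m n → Coll m n → Prop} (hv : IsVertexP v)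
    (hf : ∀ x y, v x y → f x ≤ f y) :
    ∃ g : Coll m n → κ ×ₗ ℕ ×ₗ ℕ, Function.Injective g ∧ Coarsens f g ∧ v = heightPreorder g := by
  obtain ⟨g, hg, hvg, hfg⟩ := exists_injective_isHeight_coarsens hv.1.refl hv.2
    (isHeight_ncard_setOf hv.1.refl hv.1.trans) hf
  exact ⟨g, hg, hfg, hv.1.eq_heightPreorder hvg⟩

end EdgePaths

theorem vertices_edge_connected_in_facet_general {m n : ℕ}
    (F : Coll m n → Coll m n → Prop) (hF : IsGoodRect F)
    (v w : Coll m n → Coll m n → Prop)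
    (hv : IsVertexP v) (hw : IsVertexP w)
    (hvF : Refines v F) (hwF : Refines w F) :
    Relation.ReflTransGen (AdjVFacet F) v w := by
  have hf := isHeight_ncard_setOf hF.refl hF.trans
  obtain ⟨g, hg, hfg, rfl⟩ := hv.exists_heightPreorder_eq fun x y hxy => hf.le (hvF x y hxy)
  obtain ⟨h, hh, hfh, rfl⟩ := hw.exists_heightPreorder_eq fun x y hxy => hf.le (hwF x y hxy)
  rw [hF.eq_heightPreorder hf]
  exact reflTransGen_adjVFacet_of_coarsens hg hh hfg hfh

/-- Any two vertex preorders lying in a common facet `F` (a good rectangular preorder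
with exactly two equivalence classes) are connected by a sequence of edges all of whose
preorders lie in `F`. -/
theorem vertices_edge_connected_in_facet {m n : ℕ}
    (F : Coll m n → Coll m n → Prop) (hF : IsGoodRect F)
    (htwo : ∃ a b : Coll m n, ¬ (F a b ∧ F b a) ∧
      ∀ x : Coll m n, (F x a ∧ F a x) ∨ (F x b ∧ F b x))
    (v w : Coll m n → Coll m n → Prop)
    (hv : IsVertexP v) (hw : IsVertexP w)
    (hvF : Refines v F) (hwF : Refines w F) :
    Relation.ReflTransGen (AdjVFacet F) v w :=
  vertices_edge_connected_in_facet_general F hF v w hv hw hvF hwF
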